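/- Existence of UP-majoritary reasons (correctness of the greedy procedure of Proposition 1): let Φ₁, …, Φ_m be CNF formulas over X in which no clause is valid (no clause contains both polarities of a variable), let Th be a CNF theory over X, and let x be an assignment satisfying Th that satisfies at least ⌊m/2⌋ + 1 of the Φᵢ. Let t_x be the complete term of x (containing, for each variable of X, the literal satisfied by x). Then there exists a term t ⊆ t_x such that t is a UP-implicant given Th of at least ⌊m/2⌋ + 1 of the Φᵢ, and for every literal ℓ ∈ t, the term t \ {ℓ} is not a UP-implicant given Th of at least ⌊m/2⌋ + 1 of the Φᵢ. -/

import Mathlib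

/-- An assignment satisfies a literal `(x, p)` iff it gives `x` the value `p`. -/
def satLit {V : Type*} (v : V → Bool) (ℓ : V × Bool) : Prop := v ℓ.1 = ℓ.2

instance {V : Type*} (v : V → Bool) (ℓ : V × Bool) : Decidable (satLit v ℓ) :=
  inferInstanceAs (Decidable (v ℓ.1 = ℓ.2))

/-- An assignment satisfies a clause iff it satisfies some literal of it. -/
def satClause {V : Type*} (v : V → Bool) (δ : Finset (V × Bool)) : Prop :=
  ∃ ℓ ∈ δ, satLit v ℓ

instance {V : Type*} (v : V → Bool) (δ : Finset (V × Bool)) : Decidable (satClause v δ) :=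
  inferInstanceAs (Decidable (∃ ℓ ∈ δ, satLit v ℓ))

/-- An assignment satisfies a CNF iff it satisfies every clause of it. -/
def satCNF {V : Type*} (v : V → Bool) (Φ : Finset (Finset (V × Bool))) : Prop :=
  ∀ δ ∈ Φ, satClause v δ

instance {V : Type*} (v : V → Bool) (Φ : Finset (Finset (V × Bool))) :
    Decidable (satCNF v Φ) :=
  inferInstanceAs (Decidable (∀ δ ∈ Φ, satClause v δ))

/-- A clause is valid iff it contains both polarities of some variable. -/
def validClause {V : Type*} (δ : Finset (V × Bool)) : Prop :=
  ∃ x : V, (x, true) ∈ δ ∧ (x, false) ∈ δ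

/-- The complementary literal. -/
def litCompl {V : Type*} (ℓ : V × Bool) : V × Bool := (ℓ.1, !ℓ.2)

/-- Derivability of a literal by unit propagation from a CNF theory `Th`. -/
inductive UPDeriv {V : Type*} (Th : Finset (Finset (V × Bool))) : V × Bool → Prop
  | step (δ : Finset (V × Bool)) (ℓ : V × Bool) (hδ : δ ∈ Th)
      (h : ∀ ℓ' ∈ δ, ℓ' ≠ ℓ → UPDeriv Th (litCompl ℓ')) : UPDeriv Th ℓ

/-- A term `t` is a UP-implicant of a CNF `Φ` given a CNF theory `Th`. -/
def UPImplicant {V : Type*} [DecidableEq V] (Th Φ : Finset (Finset (V × Bool)))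
    (t : Finset (V × Bool)) : Prop :=
  ∀ δ ∈ Φ, ∃ ℓ ∈ δ, UPDeriv (Th ∪ t.image (fun l => ({l} : Finset (V × Bool)))) ℓ

/-- The complete term of an assignment `x`: for each variable, the literal satisfied
by `x`. -/
def completeTerm {V : Type*} [DecidableEq V] [Fintype V] (x : V → Bool) :
    Finset (V × Bool) :=
  Finset.univ.image (fun a => (a, x a))

/-- `t` is a UP-implicant given `Th` of at least `⌊m/2⌋ + 1` of the CNFs `Φ₁, …, Φ_m`. -/
def UPMajImplicant {V : Type*} [DecidableEq V] (Th : Finset (Finset (V × Bool)))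
    (Φs : List (Finset (Finset (V × Bool)))) (t : Finset (V × Bool)) : Prop :=
  ∃ I : Finset (Fin Φs.length), Φs.length / 2 + 1 ≤ I.card ∧
    ∀ i ∈ I, UPImplicant Th (Φs.get i) t

/-!
The literals of the `Φᵢ` that `x` satisfies form a finite term meeting every clause of each `Φᵢ`
satisfied by `x`. The literals of a term are derived from its unit clauses in one propagation step,
so this term is a UP-implicant of a majority of the `Φᵢ`. A finite term has finitely many subterms,
so below it there is an inclusion-minimal one with this property.
-/

section Derivation

variable {V : Type*}

theorem UPDeriv.of_singleton_mem {Th : Finset (Finset (V × Bool))} {ℓ : V × Bool}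
    (hℓ : {ℓ} ∈ Th) : UPDeriv Th ℓ :=
  .step {ℓ} ℓ hℓ fun _ hmem hne => absurd (Finset.mem_singleton.mp hmem) hne

variable [DecidableEq V]

theorem UPDeriv.of_mem_term (Th : Finset (Finset (V × Bool))) {t : Finset (V × Bool)}
    {ℓ : V × Bool} (hℓ : ℓ ∈ t) :
    UPDeriv (Th ∪ t.image (fun l => ({l} : Finset (V × Bool)))) ℓ :=
  .of_singleton_mem (Finset.mem_union_right _ (Finset.mem_image_of_mem _ hℓ))

theorem UPImplicant.of_forall_exists_mem (Th : Finset (Finset (V × Bool)))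
    {Φ : Finset (Finset (V × Bool))} {t : Finset (V × Bool)}
    (hmeet : ∀ δ ∈ Φ, ∃ ℓ ∈ δ, ℓ ∈ t) : UPImplicant Th Φ t := by
  intro δ hδ
  obtain ⟨ℓ, hℓδ, hℓt⟩ := hmeet δ hδ
  exact ⟨ℓ, hℓδ, .of_mem_term Th hℓt⟩

end Derivation

section SatisfiedLits

variable {V : Type*} [DecidableEq V]

/-- The term of the literals occurring in the CNF `Φ` that the assignment `x` satisfies. It plays
the role of the complete term of `x`, but is finite even if there are infinitely many variables. -/
def satisfiedLits (x : V → Bool) (Φ : Finset (Finset (V × Bool))) : Finset (V × Bool) :=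
  {ℓ ∈ Φ.biUnion id | satLit x ℓ}

theorem mem_satisfiedLits {x : V → Bool} {Φ : Finset (Finset (V × Bool))} {ℓ : V × Bool} :
    ℓ ∈ satisfiedLits x Φ ↔ (∃ δ ∈ Φ, ℓ ∈ δ) ∧ satLit x ℓ := by
  simp [satisfiedLits]

theorem satCNF.upImplicant_of_satisfiedLits_subset {x : V → Bool}
    {Φ : Finset (Finset (V × Bool))} {t : Finset (V × Bool)} (hx : satCNF x Φ)
    (ht : satisfiedLits x Φ ⊆ t) (Th : Finset (Finset (V × Bool))) : UPImplicant Th Φ t := by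
  refine .of_forall_exists_mem Th fun δ hδ => ?_
  obtain ⟨ℓ, hℓδ, hxℓ⟩ := hx δ hδ
  exact ⟨ℓ, hℓδ, ht (mem_satisfiedLits.mpr ⟨⟨δ, hδ, hℓδ⟩, hxℓ⟩)⟩

theorem mem_completeTerm [Fintype V] {x : V → Bool} {ℓ : V × Bool} :
    ℓ ∈ completeTerm x ↔ satLit x ℓ := by
  simp [completeTerm, satLit, Prod.ext_iff]

end SatisfiedLits

theorem card_filter_get_eq_countP {α : Type*} (p : α → Prop) [DecidablePred p] (l : List α) :
    Finset.card {i : Fin l.length | p (l.get i)} = l.countP (fun a => decide (p a)) := by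
  calc
    Finset.card {i : Fin l.length | p (l.get i)}
      = (Finset.univ.val.map l.get).countP p := by
      rw [Multiset.countP_map, Finset.card_def, Finset.filter_val]
    _ = l.countP (fun a => decide (p a)) := by
      rw [Fin.univ_val_map, List.ofFn_get, Multiset.coe_countP]

section Majority

variable {V : Type*} [DecidableEq V]

theorem UPMajImplicant.of_satisfiedLits_subset {Φs : List (Finset (Finset (V × Bool)))}
    {x : V → Bool} {t : Finset (V × Bool)} (Th : Finset (Finset (V × Bool)))
    (ht : ∀ Φ ∈ Φs, satisfiedLits x Φ ⊆ t)
    (hmaj : Φs.length / 2 + 1 ≤ Φs.countP (fun Φ => decide (satCNF x Φ))) :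
    UPMajImplicant Th Φs t := by
  refine ⟨Finset.univ.filter fun i => satCNF x (Φs.get i), ?_, fun i hi => ?_⟩
  · rwa [card_filter_get_eq_countP]
  · have hx : satCNF x (Φs.get i) := (Finset.mem_filter.mp hi).2
    exact hx.upImplicant_of_satisfiedLits_subset (ht _ (Φs.get_mem i)) Th

theorem exists_up_majoritary_reason_general (Φs : List (Finset (Finset (V × Bool))))
    (Th : Finset (Finset (V × Bool))) (x : V → Bool)
    (hmaj : Φs.length / 2 + 1 ≤ Φs.countP (fun Φ => decide (satCNF x Φ))) :
    ∃ t : Finset (V × Bool), (∀ ℓ ∈ t, satLit x ℓ) ∧ Minimal (UPMajImplicant Th Φs) t := by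
  let s : Finset (V × Bool) := Φs.toFinset.biUnion (satisfiedLits x)
  have hsub : ∀ Φ ∈ Φs, satisfiedLits x Φ ⊆ s := fun Φ hΦ =>
    Finset.subset_biUnion_of_mem (satisfiedLits x) (List.mem_toFinset.mpr hΦ)
  have hsat : ∀ ℓ ∈ s, satLit x ℓ := fun ℓ hℓ =>
    let ⟨_, _, hℓΦ⟩ := Finset.mem_biUnion.mp hℓ
    (mem_satisfiedLits.mp hℓΦ).2
  obtain ⟨t, hts, hmin⟩ := exists_minimal_le_of_wellFoundedLT (UPMajImplicant Th Φs) s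
    (.of_satisfiedLits_subset Th hsub hmaj)
  exact ⟨t, fun ℓ hℓ => hsat ℓ (hts hℓ), hmin⟩

end Majority

/-- Existence of UP-majoritary reasons (correctness of the greedy procedure): if no
clause of any `Φᵢ` is valid, `x` satisfies `Th`, and `x` satisfies at least `⌊m/2⌋ + 1`
of the `Φᵢ`, then there is a term `t ⊆ t_x` that is a UP-implicant given `Th` of at
least `⌊m/2⌋ + 1` of the `Φᵢ`, and such that removing any literal of `t` destroys this
property. -/
theorem exists_up_majoritary_reason {V : Type*} [DecidableEq V] [Fintype V]
    (Φs : List (Finset (Finset (V × Bool)))) (Th : Finset (Finset (V × Bool)))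
    (hval : ∀ Φ ∈ Φs, ∀ δ ∈ Φ, ¬ validClause δ)
    (x : V → Bool) (hxTh : satCNF x Th)
    (hmaj : Φs.length / 2 + 1 ≤ Φs.countP (fun Φ => decide (satCNF x Φ))) :
    ∃ t : Finset (V × Bool), t ⊆ completeTerm x ∧ UPMajImplicant Th Φs t ∧
      ∀ ℓ ∈ t, ¬ UPMajImplicant Th Φs (t.erase ℓ) := by
  obtain ⟨t, hsat, hmin⟩ := exists_up_majoritary_reason_general Φs Th x hmaj
  exact ⟨t, fun ℓ hℓ => mem_completeTerm.mpr (hsat ℓ hℓ), hmin.prop,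
    fun ℓ hℓ => hmin.not_prop_of_lt (Finset.erase_ssubset hℓ)⟩
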